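/- Let `state` and `inputs` be types, and let A : state → inputs → Prop, G_I : state → Prop, G_T : state → inputs → state → Prop be the assumptions, initial guarantee and transitional guarantee of an assume-guarantee contract. Suppose f₀ : state → inputs → state is a Skolem function for the base check, i.e. for all s and i, if G_I s and A s i then G_T s i (f₀ s i), and f₁ : state → inputs → state is a Skolem function for the one-step inductive check, i.e. for all s, i₁, s₁, i, if A s i₁, G_T s i₁ s₁ and A s₁ i then G_T s₁ i (f₁ s₁ i). Let s₀ be a state with G_I s₀ and let ι : ℕ → inputs be an input stream. Define the run σ : ℕ → state by σ 0 = s₀, σ 1 = f₀ s₀ (ι 0), and σ (t+2) = f₁ (σ (t+1)) (ι (t+1)). If A (σ t) (ι t) holds for every t, then G_T (σ t) (ι t) (σ (t+1)) holds for every t; that is, the program assembled from the Skolem functions produces an infinite run satisfying the contract. -/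

import Mathlib

theorem synthesized_run_one_inductive {state inputs : Type*}
    (A : state → inputs → Prop) (G_I : state → Prop)
    (G_T : state → inputs → state → Prop)
    (f₀ f₁ : state → inputs → state)
    (hf₀ : ∀ s i, G_I s → A s i → G_T s i (f₀ s i))
    (hf₁ : ∀ s i₁ s₁ i, A s i₁ → G_T s i₁ s₁ → A s₁ i → G_T s₁ i (f₁ s₁ i))
    (s₀ : state) (hs₀ : G_I s₀) (ι : ℕ → inputs)
    (σ : ℕ → state)
    (hσ0 : σ 0 = s₀) (hσ1 : σ 1 = f₀ s₀ (ι 0))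
    (hσ : ∀ t, σ (t + 2) = f₁ (σ (t + 1)) (ι (t + 1)))
    (hA : ∀ t, A (σ t) (ι t)) :
    ∀ t, G_T (σ t) (ι t) (σ (t + 1)) := by
  intro t
  induction t with
  | zero =>
    have h := hA 0
    rw [hσ0] at h
    rw [hσ0, hσ1]
    exact hf₀ s₀ (ι 0) hs₀ h
  | succ t ih =>
    -- The transition just established supplies the one-step history that `f₁` needs.
    rw [hσ t]
    exact hf₁ (σ t) (ι t) (σ (t + 1)) (ι (t + 1)) (hA t) ih (hA (t + 1))
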